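/- arXiv:0905.3372 — 2 statements merged into one kernel-verified Lean document; each statement's English description precedes it below -/
import Mathlib

section
/- Let E be a compact metric space, k = n + m with n, m ≥ 1 integers, and write points of ℝ^k as x = (z, y) ∈ ℝ^n × ℝ^m. Let A ⊆ ℝ^k be Borel and f : A → E be a Borel map. Suppose A₁, A₂ ⊆ A are Borel sets such that: for every (z, y) ∈ A₁ the map z' ↦ f(z', y), defined on the slice {z' ∈ ℝ^n : (z', y) ∈ A}, satisfies δ_z(f(·, y)) < ∞ (with k replaced by n in the definition of δ); and for every (z, y) ∈ A₂ the map y' ↦ f(z, y'), defined on {y' ∈ ℝ^m : (z, y') ∈ A}, satisfies δ_y(f(z, ·)) < ∞ (with k replaced by m). Then δ_x f < ∞ for Leb^k-almost every x ∈ A₁ ∩ A₂. -/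
open MeasureTheory Filter Metric Set

/-- For a map `f` defined (in particular) on `A ⊆ X` and a point `x`, `delta k A f x` is the
smallest `M ∈ [0,∞]` such that `r^{-k}·Leb({y ∈ A ∩ B_r(x) : d(f y, f x) > M r}) → 0`
as `r → 0+`. -/
noncomputable def delta {X E : Type*} [PseudoMetricSpace X] [MeasureSpace X]
    [PseudoMetricSpace E] (k : ℕ) (A : Set X) (f : X → E) (x : X) : ENNReal :=
  sInf {M : ENNReal |
    Tendsto
      (fun r : ℝ =>
        volume {y | y ∈ A ∩ ball x r ∧ M * ENNReal.ofReal r < edist (f y) (f x)} /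
          ENNReal.ofReal (r ^ k))
      (nhdsWithin 0 (Ioi 0)) (nhds 0)}

/-- The point of `ℝ^{n+m} = ℝ^n × ℝ^m` (with the Euclidean metric) with coordinates
`(z, y)`. -/
noncomputable def combine {n m : ℕ} (z : EuclideanSpace ℝ (Fin n))
    (y : EuclideanSpace ℝ (Fin m)) : EuclideanSpace ℝ (Fin n ⊕ Fin m) :=
  (WithLp.equiv 2 _).symm (Sum.elim ((WithLp.equiv 2 _) z) ((WithLp.equiv 2 _) y))

/-- The projection `x = (z, y) ↦ z`. -/
noncomputable def projL {n m : ℕ} (x : EuclideanSpace ℝ (Fin n ⊕ Fin m)) :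
    EuclideanSpace ℝ (Fin n) :=
  (WithLp.equiv 2 _).symm fun i => (WithLp.equiv 2 _) x (Sum.inl i)

/-- The projection `x = (z, y) ↦ y`. -/
noncomputable def projR {n m : ℕ} (x : EuclideanSpace ℝ (Fin n ⊕ Fin m)) :
    EuclideanSpace ℝ (Fin m) :=
  (WithLp.equiv 2 _).symm fun j => (WithLp.equiv 2 _) x (Sum.inr j)

/-- dyadic scale to the power `k` -/
noncomputable def dyW (k i : ℕ) : ENNReal := ENNReal.ofReal (((1 / 2 : ℝ) ^ i) ^ k)

/-- `v i = o(2^{-ik})`, in a countable form. -/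
def Sm (k : ℕ) (v : ℕ → ENNReal) : Prop :=
  ∀ l : ℕ, ∃ j : ℕ, ∀ i, j ≤ i → v i ≤ ((l : ENNReal) + 1)⁻¹ * dyW k i

lemma dyW_pos (k i : ℕ) : dyW k i ≠ 0 := by
  unfold dyW
  simp only [ne_eq, ENNReal.ofReal_eq_zero, not_le]
  positivity

lemma dyW_top (k i : ℕ) : dyW k i ≠ ⊤ := ENNReal.ofReal_ne_top

lemma dyW_add (n m i : ℕ) : dyW (n + m) i = dyW n i * dyW m i := by
  unfold dyW
  rw [pow_add, ENNReal.ofReal_mul (by positivity)]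

lemma exists_inv_small (C ε : ENNReal) (hC : C ≠ ⊤) (hε : ε ≠ 0) :
    ∃ l : ℕ, C * ((l : ENNReal) + 1)⁻¹ ≤ ε := by
  rcases eq_or_ne C 0 with rfl | hC0
  · exact ⟨0, by simp⟩
  obtain ⟨l, hl⟩ := ENNReal.exists_inv_nat_lt (a := ε / C) (ENNReal.div_ne_zero.2 ⟨hε, hC⟩)
  refine ⟨l, ?_⟩
  calc C * ((l : ENNReal) + 1)⁻¹ ≤ C * (l : ENNReal)⁻¹ := by
        gcongr
        exact le_self_add
    _ ≤ C * (ε / C) := by gcongr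
    _ ≤ ε := ENNReal.mul_div_le

lemma Sm.of_const {k : ℕ} {v : ℕ → ENNReal} (C : ENNReal) (hC : C ≠ ⊤)
    (h : ∀ l : ℕ, ∃ j : ℕ, ∀ i, j ≤ i → v i ≤ C * ((l : ENNReal) + 1)⁻¹ * dyW k i) :
    Sm k v := by
  intro l
  obtain ⟨l', hl'⟩ := exists_inv_small C (((l : ENNReal) + 1)⁻¹) hC (by simp)
  obtain ⟨j, hj⟩ := h l'
  exact ⟨j, fun i hi => (hj i hi).trans (by gcongr)⟩

lemma Sm.mono {k : ℕ} {v w : ℕ → ENNReal} (h : Sm k w) (hvw : ∀ i, v i ≤ w i) : Sm k v :=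
  fun l => (h l).imp fun _ hj i hi => (hvw i).trans (hj i hi)

lemma tendsto_dy : Tendsto (fun i : ℕ => (1 / 2 : ℝ) ^ i) atTop (nhdsWithin 0 (Ioi 0)) := by
  rw [tendsto_nhdsWithin_iff]
  exact ⟨tendsto_pow_atTop_nhds_zero_of_lt_one (by norm_num) (by norm_num),
    Eventually.of_forall fun i => by simp⟩

lemma Sm.of_tendsto {k : ℕ} {v : ℝ → ENNReal}
    (h : Tendsto (fun r : ℝ => v r / ENNReal.ofReal (r ^ k)) (nhdsWithin 0 (Ioi 0)) (nhds 0)) :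
    Sm k (fun i => v ((1 / 2 : ℝ) ^ i)) := by
  intro l
  have h2 := (h.comp tendsto_dy).eventually_le_const
    (u := ((l : ENNReal) + 1)⁻¹) (by simp)
  obtain ⟨j, hj⟩ := eventually_atTop.1 h2
  refine ⟨j, fun i hi => ?_⟩
  have := hj i hi
  exact (ENNReal.div_le_iff (dyW_pos k i) (dyW_top k i)).1 this

lemma ms_and {α : Type*} [MeasurableSpace α] {p q : α → Prop} (hp : MeasurableSet {a | p a})
    (hq : MeasurableSet {a | q a}) : MeasurableSet {a | p a ∧ q a} := hp.inter hq

section product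

variable {n m : ℕ} {E : Type*} [MetricSpace E] 

lemma vol_ball_le (n i : ℕ) (z : EuclideanSpace ℝ (Fin n)) :
    volume (closedBall z ((1 / 2 : ℝ) ^ i)) =
      dyW n i * volume (ball (0 : EuclideanSpace ℝ (Fin n)) 1) := by
  rw [Measure.addHaar_closedBall _ _ (by positivity)]
  simp [dyW]

lemma density_slice (S : Set (EuclideanSpace ℝ (Fin n))) (hS : MeasurableSet S) :
    ∀ᵐ z, z ∈ S → Sm n (fun i => volume {z' | dist z' z < (1 / 2 : ℝ) ^ i ∧ z' ∉ S}) := by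
  filter_upwards [Besicovitch.ae_tendsto_measure_inter_div_of_measurableSet
    (volume : Measure (EuclideanSpace ℝ (Fin n))) hS.compl] with z hz hzS
  have h0 : Sᶜ.indicator (1 : EuclideanSpace ℝ (Fin n) → ENNReal) z = 0 := by simp [hzS]
  rw [h0] at hz
  have hb : volume (ball (0 : EuclideanSpace ℝ (Fin n)) 1) ≠ ⊤ := measure_ball_lt_top.ne
  have hb0 : volume (ball (0 : EuclideanSpace ℝ (Fin n)) 1) ≠ 0 :=
    (measure_ball_pos _ _ one_pos).ne'
  refine Sm.of_const _ hb fun l => ?_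
  have h2 := (hz.comp tendsto_dy).eventually_le_const
    (u := ((l : ENNReal) + 1)⁻¹) (by simp)
  obtain ⟨j, hj⟩ := eventually_atTop.1 h2
  refine ⟨j, fun i hi => ?_⟩
  have h3 := hj i hi
  simp only [Function.comp] at h3
  rw [vol_ball_le, ENNReal.div_le_iff (mul_ne_zero (dyW_pos n i) hb0)
    (ENNReal.mul_ne_top (dyW_top n i) hb)] at h3
  refine (measure_mono ?_).trans (h3.trans (le_of_eq (by ring)))
  rintro z' ⟨h1, h2⟩
  exact ⟨h2, h1.le⟩

lemma measurableSet_Sm {α : Type*} [MeasurableSpace α] (k : ℕ) (v : ℕ → α → ENNReal)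
    (hv : ∀ i, Measurable (v i)) : MeasurableSet {p | Sm k (fun i => v i p)} := by
  unfold Sm
  simp only [ofPred_forall, ofPred_exists]
  exact MeasurableSet.iInter fun l => MeasurableSet.iUnion fun j => MeasurableSet.iInter fun i =>
    MeasurableSet.iInter fun _ => measurableSet_le (hv i) measurable_const

lemma density_prod (G : Set (EuclideanSpace ℝ (Fin n) × EuclideanSpace ℝ (Fin m)))
    (hG : MeasurableSet G) :
    ∀ᵐ p, p ∈ G →
      Sm n (fun i => volume {z' | dist z' p.1 < (1 / 2 : ℝ) ^ i ∧ (z', p.2) ∉ G}) := by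
  have hmeas : MeasurableSet {p : EuclideanSpace ℝ (Fin n) × EuclideanSpace ℝ (Fin m) | 
      Sm n (fun i => volume {z' | dist z' p.1 < (1 / 2 : ℝ) ^ i ∧ (z', p.2) ∉ G})} := by
    refine measurableSet_Sm n _ fun i => ?_
    have : MeasurableSet {q : (EuclideanSpace ℝ (Fin n) × EuclideanSpace ℝ (Fin m)) ×
        EuclideanSpace ℝ (Fin n) | dist q.2 q.1.1 < (1 / 2 : ℝ) ^ i ∧ (q.2, q.1.2) ∉ G} := by
      refine ms_and (measurableSet_lt (by fun_prop) measurable_const) ?_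
      exact (hG.preimage (f := fun q : (EuclideanSpace ℝ (Fin n) × EuclideanSpace ℝ (Fin m)) ×
        EuclideanSpace ℝ (Fin n) => (q.2, q.1.2)) (by fun_prop)).compl
    exact measurable_measure_prodMk_left this
  have hbad := hG.inter hmeas.compl
  rw [ae_iff]
  have heq : {a : EuclideanSpace ℝ (Fin n) × EuclideanSpace ℝ (Fin m) | ¬(a ∈ G →
      Sm n (fun i => volume {z' | dist z' a.1 < (1 / 2 : ℝ) ^ i ∧ (z', a.2) ∉ G}))} =
      G ∩ {p : EuclideanSpace ℝ (Fin n) × EuclideanSpace ℝ (Fin m) | 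
      Sm n (fun i => volume {z' | dist z' p.1 < (1 / 2 : ℝ) ^ i ∧ (z', p.2) ∉ G})}ᶜ := by
    ext a
    simp
  rw [heq, Measure.volume_eq_prod, Measure.prod_apply_symm hbad]
  refine (lintegral_congr fun y => ?_).trans lintegral_zero
  have := density_slice {z | (z, y) ∈ G} (hG.preimage (by fun_prop))
  rw [ae_iff] at this
  rw [← this]
  congr 1
  ext z
  simp

lemma prod_main [CompactSpace E] [MeasurableSpace E] [BorelSpace E]
    (A : Set (EuclideanSpace ℝ (Fin n) × EuclideanSpace ℝ (Fin m))) (hA : MeasurableSet A)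
    (F : EuclideanSpace ℝ (Fin n) × EuclideanSpace ℝ (Fin m) → E) (hF : Measurable F) (M : ℕ) :
    ∀ᵐ p, p ∈ A →
      Sm n (fun i => volume {z' | (z', p.2) ∈ A ∧ dist z' p.1 < (1 / 2 : ℝ) ^ i ∧
        M * ENNReal.ofReal ((1 / 2 : ℝ) ^ i) < edist (F (z', p.2)) (F p)}) →
      Sm m (fun i => volume {y' | (p.1, y') ∈ A ∧ dist y' p.2 < (1 / 2 : ℝ) ^ i ∧
        M * ENNReal.ofReal ((1 / 2 : ℝ) ^ i) < edist (F (p.1, y')) (F p)}) →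
      Sm (n + m) (fun i => volume {q | q ∈ A ∧ dist q.1 p.1 < (1 / 2 : ℝ) ^ i ∧
        dist q.2 p.2 < (1 / 2 : ℝ) ^ i ∧
        (2 * M : ENNReal) * ENNReal.ofReal ((1 / 2 : ℝ) ^ i) < edist (F q) (F p)}) := by
  have hv2 : ∀ i : ℕ, Measurable (fun p : EuclideanSpace ℝ (Fin n) × EuclideanSpace ℝ (Fin m) =>
      volume {y' | (p.1, y') ∈ A ∧ dist y' p.2 < (1 / 2 : ℝ) ^ i ∧
        M * ENNReal.ofReal ((1 / 2 : ℝ) ^ i) < edist (F (p.1, y')) (F p)}) := by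
    intro i
    have : MeasurableSet {q : (EuclideanSpace ℝ (Fin n) × EuclideanSpace ℝ (Fin m)) ×
        EuclideanSpace ℝ (Fin m) | (q.1.1, q.2) ∈ A ∧ dist q.2 q.1.2 < (1 / 2 : ℝ) ^ i ∧
        M * ENNReal.ofReal ((1 / 2 : ℝ) ^ i) < edist (F (q.1.1, q.2)) (F q.1)} := by
      refine ms_and ?_ (ms_and
        (measurableSet_lt (by fun_prop) measurable_const)
        (measurableSet_lt measurable_const ?_))
      · exact (hA.preimage (f := fun q : (EuclideanSpace ℝ (Fin n) × EuclideanSpace ℝ (Fin m)) ×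
          EuclideanSpace ℝ (Fin m) => (q.1.1, q.2)) (by fun_prop))
      · exact (hF.comp (by fun_prop)).edist (hF.comp measurable_fst)
    exact measurable_measure_prodMk_left this
  let G : ℕ → ℕ → Set (EuclideanSpace ℝ (Fin n) × EuclideanSpace ℝ (Fin m)) := fun l j =>
    {p | p ∈ A ∧ ∀ i, j ≤ i → volume {y' | (p.1, y') ∈ A ∧ dist y' p.2 < (1 / 2 : ℝ) ^ i ∧
        M * ENNReal.ofReal ((1 / 2 : ℝ) ^ i) < edist (F (p.1, y')) (F p)} ≤
        ((l : ENNReal) + 1)⁻¹ * dyW m i}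
  have hG : ∀ l j, MeasurableSet (G l j) := by
    intro l j
    refine ms_and hA ?_
    simp only [ofPred_forall]
    exact MeasurableSet.iInter fun i =>
      MeasurableSet.iInter fun _ => measurableSet_le (hv2 i) measurable_const
  have hD : ∀ᵐ p, ∀ l j, p ∈ G l j →
      Sm n (fun i => volume {z' | dist z' p.1 < (1 / 2 : ℝ) ^ i ∧ (z', p.2) ∉ G l j}) := by
    rw [ae_all_iff]; intro l
    rw [ae_all_iff]; intro j
    exact density_prod _ (hG l j)
  filter_upwards [hD] with p hp hpA h1 h2
  have hbZ : volume (ball (0 : EuclideanSpace ℝ (Fin n)) 1) ≠ ⊤ := measure_ball_lt_top.ne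
  have hbY : volume (ball (0 : EuclideanSpace ℝ (Fin m)) 1) ≠ ⊤ := measure_ball_lt_top.ne
  set CZ := volume (ball (0 : EuclideanSpace ℝ (Fin n)) 1) with hCZ
  set CY := volume (ball (0 : EuclideanSpace ℝ (Fin m)) 1) with hCY
  refine Sm.of_const (CY + CY + CZ) (by simp [hbZ, hbY]) fun l => ?_
  obtain ⟨j, hj⟩ := h2 l
  obtain ⟨j1, hj1⟩ := h1 l
  obtain ⟨j2, hj2⟩ := hp l j ⟨hpA, hj⟩ l
  refine ⟨max j (max j1 j2), fun i hi => ?_⟩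
  have hij : j ≤ i := (le_max_left _ _).trans hi
  have hij1 : j1 ≤ i := ((le_max_left _ _).trans (le_max_right _ _)).trans hi
  have hij2 : j2 ≤ i := ((le_max_right _ _).trans (le_max_right _ _)).trans hi
  have k1 := hj1 i hij1
  have k2 := hj2 i hij2
  set r : ℝ := (1 / 2 : ℝ) ^ i with hr
  set η : ENNReal := ((l : ENNReal) + 1)⁻¹ with hη
  set B1 := {z' | (z', p.2) ∈ A ∧ dist z' p.1 < r ∧
        M * ENNReal.ofReal r < edist (F (z', p.2)) (F p)} with hB1
  set B2 := {z' | dist z' p.1 < r ∧ (z', p.2) ∉ G l j} with hB2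
  let T : Set (EuclideanSpace ℝ (Fin n) × EuclideanSpace ℝ (Fin m)) :=
    {q | (q.1, p.2) ∈ G l j ∧ dist q.1 p.1 < r ∧ q ∈ A ∧ dist q.2 p.2 < r ∧
      M * ENNReal.ofReal r < edist (F q) (F (q.1, p.2))}
  have hT : MeasurableSet T := by
    refine ms_and ?_ (ms_and
        (measurableSet_lt (by fun_prop) measurable_const) (ms_and hA (ms_and
        (measurableSet_lt (by fun_prop) measurable_const)
        (measurableSet_lt measurable_const ?_))))
    · exact ((hG l j).preimage (f := fun q : EuclideanSpace ℝ (Fin n) × EuclideanSpace ℝ (Fin m) =>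
        (q.1, p.2)) (by fun_prop))
    · exact hF.edist (hF.comp (by fun_prop))
  have hTle : volume T ≤ dyW n i * CZ * (η * dyW m i) := by
    rw [Measure.volume_eq_prod, Measure.prod_apply hT]
    calc ∫⁻ z, volume (Prod.mk z ⁻¹' T)
        ≤ ∫⁻ z, (closedBall p.1 r).indicator (fun _ => η * dyW m i) z := by
          refine lintegral_mono fun z => ?_
          by_cases hz : (z, p.2) ∈ G l j ∧ dist z p.1 < r
          · rw [indicator_of_mem (by exact hz.2.le)]
            refine (measure_mono ?_).trans (hz.1.2 i hij)
            rintro y ⟨_, _, h3, h4, h5⟩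
            exact ⟨h3, h4, h5⟩
          · have : Prod.mk z ⁻¹' T = ∅ := by
              ext y
              simp only [mem_preimage, mem_empty_iff_false, iff_false]
              rintro ⟨h3, h4, _⟩
              exact hz ⟨h3, h4⟩
            rw [this]; simp
      _ = dyW n i * CZ * (η * dyW m i) := by
          rw [lintegral_indicator_const measurableSet_closedBall, vol_ball_le]
          ring
  have hsub : {q | q ∈ A ∧ dist q.1 p.1 < r ∧ dist q.2 p.2 < r ∧
        (2 * M : ENNReal) * ENNReal.ofReal r < edist (F q) (F p)} ⊆
      (B1 ×ˢ closedBall p.2 r ∪ B2 ×ˢ closedBall p.2 r) ∪ T := by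
    rintro ⟨z, y⟩ ⟨hq, hz, hy, hd⟩
    simp only at hz hy hd
    by_cases hzG : (z, p.2) ∈ G l j
    · by_cases hb : M * ENNReal.ofReal r < edist (F (z, p.2)) (F p)
      · exact Or.inl (Or.inl ⟨⟨hzG.1, hz, hb⟩, hy.le⟩)
      · refine Or.inr ⟨hzG, hz, hq, hy, ?_⟩
        by_contra hc
        rw [not_lt] at hb hc
        refine absurd hd (not_lt.2 ?_)
        calc edist (F (z, y)) (F p) ≤ edist (F (z, y)) (F (z, p.2)) + edist (F (z, p.2)) (F p) :=
              edist_triangle _ _ _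
          _ ≤ M * ENNReal.ofReal r + M * ENNReal.ofReal r := add_le_add hc hb
          _ = _ := by ring
    · exact Or.inl (Or.inr ⟨⟨hz, hzG⟩, hy.le⟩)
  calc _ ≤ volume ((B1 ×ˢ closedBall p.2 r ∪ B2 ×ˢ closedBall p.2 r) ∪ T) := measure_mono hsub
    _ ≤ (volume (B1 ×ˢ closedBall p.2 r) + volume (B2 ×ˢ closedBall p.2 r)) + volume T :=
        (measure_union_le _ _).trans (by gcongr; exact measure_union_le _ _)
    _ ≤ (η * dyW n i * (dyW m i * CY) + η * dyW n i * (dyW m i * CY)) +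
          dyW n i * CZ * (η * dyW m i) := by
        rw [Measure.volume_eq_prod, Measure.prod_prod, Measure.prod_prod, vol_ball_le]
        rw [Measure.volume_eq_prod] at hTle
        gcongr
    _ = (CY + CY + CZ) * η * dyW (n + m) i := by rw [dyW_add]; ring

end product

lemma delta_lt_top_imp {X E : Type*} [PseudoMetricSpace X] [MeasureSpace X]
    [PseudoMetricSpace E] {k : ℕ} {A : Set X} {f : X → E} {x : X} (h : delta k A f x < ⊤) :
    ∃ M : ℕ, ∀ M' : ℕ, M ≤ M' → Sm k (fun i => volume {y | y ∈ A ∧ dist y x < (1 / 2 : ℝ) ^ i ∧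
      M' * ENNReal.ofReal ((1 / 2 : ℝ) ^ i) < edist (f y) (f x)}) := by
  unfold delta at h
  obtain ⟨M, hM, hMt⟩ := sInf_lt_iff.1 h
  obtain ⟨N, hN⟩ := ENNReal.exists_nat_gt hMt.ne
  refine ⟨N, fun M' hM' => (Sm.of_tendsto hM).mono fun i => measure_mono ?_⟩
  rintro y ⟨h1, h2, h3⟩
  refine ⟨⟨h1, h2⟩, lt_of_le_of_lt ?_ h3⟩
  gcongr
  exact hN.le.trans (by exact_mod_cast hM')

lemma delta_lt_top_of {X E : Type*} [PseudoMetricSpace X] [MeasureSpace X]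
    [PseudoMetricSpace E] {k : ℕ} {A : Set X} {f : X → E} {x : X} (M : ENNReal) (hM : M ≠ ⊤)
    (h : Sm k (fun i => volume {y | y ∈ A ∧ dist y x < (1 / 2 : ℝ) ^ i ∧
      M * ENNReal.ofReal ((1 / 2 : ℝ) ^ i) < edist (f y) (f x)})) : delta k A f x < ⊤ := by
  have key : Tendsto
      (fun r : ℝ =>
        volume {y | y ∈ A ∩ ball x r ∧ (M * 2) * ENNReal.ofReal r < edist (f y) (f x)} /
          ENNReal.ofReal (r ^ k))
      (nhdsWithin 0 (Ioi 0)) (nhds 0) := by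
    rw [ENNReal.tendsto_nhds_zero]
    intro ε hε
    obtain ⟨l, hl⟩ := exists_inv_small (2 ^ k) ε (by simp) hε.ne'
    obtain ⟨j, hj⟩ := h l
    have hpos : (0 : ℝ) < (1 / 2 : ℝ) ^ j := by positivity
    filter_upwards [Ioo_mem_nhdsGT hpos] with r hr
    obtain ⟨i, hi1, hi2⟩ := exists_nat_pow_near_of_lt_one hr.1
      (hr.2.le.trans (pow_le_one₀ (by norm_num) (by norm_num))) (y := (1 / 2 : ℝ))
      (by norm_num) (by norm_num)
    have hji : j ≤ i := by
      have h1 := hi1.trans hr.2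
      rw [pow_lt_pow_iff_right_of_lt_one₀ (by norm_num) (by norm_num)] at h1
      omega
    have h2r : (1 / 2 : ℝ) ^ i ≤ 2 * r := by
      rw [pow_succ] at hi1
      linarith
    rw [ENNReal.div_le_iff (by simpa using pow_pos hr.1 k) ENNReal.ofReal_ne_top]
    calc _ ≤ volume {y | y ∈ A ∧ dist y x < (1 / 2 : ℝ) ^ i ∧
          M * ENNReal.ofReal ((1 / 2 : ℝ) ^ i) < edist (f y) (f x)} := by
          refine measure_mono ?_
          rintro y ⟨⟨h1, h2⟩, h3⟩
          refine ⟨h1, lt_of_lt_of_le h2 hi2, lt_of_le_of_lt ?_ h3⟩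
          rw [mul_assoc]
          gcongr
          rw [← ENNReal.ofReal_ofNat, ← ENNReal.ofReal_mul (by norm_num)]
          exact ENNReal.ofReal_le_ofReal h2r
      _ ≤ ((l : ENNReal) + 1)⁻¹ * dyW k i := hj i hji
      _ ≤ ((l : ENNReal) + 1)⁻¹ * (2 ^ k * ENNReal.ofReal (r ^ k)) := by
          gcongr
          unfold dyW
          rw [← ENNReal.ofReal_ofNat, ← ENNReal.ofReal_pow (by norm_num),
            ← ENNReal.ofReal_mul (by positivity), ← mul_pow]
          exact ENNReal.ofReal_le_ofReal (pow_le_pow_left₀ (by positivity) h2r k)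
      _ = (2 ^ k * ((l : ENNReal) + 1)⁻¹) * ENNReal.ofReal (r ^ k) := by ring
      _ ≤ ε * ENNReal.ofReal (r ^ k) := by gcongr
  have hle : delta k A f x ≤ M * 2 := sInf_le key
  exact lt_of_le_of_lt hle (ENNReal.mul_lt_top hM.lt_top (by simp))

/-- The splitting `ℝ^{n+m} ≃ ℝ^n × ℝ^m` as a measurable equivalence. -/
noncomputable def splitE (n m : ℕ) : EuclideanSpace ℝ (Fin n ⊕ Fin m) ≃ᵐ
    EuclideanSpace ℝ (Fin n) × EuclideanSpace ℝ (Fin m) :=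
  ((MeasurableEquiv.toLp 2 (Fin n ⊕ Fin m → ℝ)).symm.trans
    (MeasurableEquiv.sumPiEquivProdPi (fun _ : Fin n ⊕ Fin m => ℝ))).trans
    (MeasurableEquiv.prodCongr (MeasurableEquiv.toLp 2 (Fin n → ℝ))
      (MeasurableEquiv.toLp 2 (Fin m → ℝ)))

lemma splitE_apply (n m : ℕ) (x : EuclideanSpace ℝ (Fin n ⊕ Fin m)) :
    splitE n m x = (projL x, projR x) := rfl

lemma splitE_mp (n m : ℕ) : MeasurePreserving (splitE n m) := by
  unfold splitE
  refine MeasurePreserving.trans (MeasurePreserving.trans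
    (EuclideanSpace.volume_preserving_symm_measurableEquiv_toLp _)
    (volume_measurePreserving_sumPiEquivProdPi _)) ?_
  exact (PiLp.volume_preserving_toLp (Fin n)).prod (PiLp.volume_preserving_toLp (Fin m))

lemma combine_proj {n m : ℕ} (x : EuclideanSpace ℝ (Fin n ⊕ Fin m)) :
    combine (projL x) (projR x) = x := by
  ext (i | i) <;> rfl

lemma combine_eq_symm {n m : ℕ} (q : EuclideanSpace ℝ (Fin n) × EuclideanSpace ℝ (Fin m)) :
    combine q.1 q.2 = (splitE n m).symm q := by
  rw [← MeasurableEquiv.symm_apply_apply (splitE n m) (combine q.1 q.2)]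
  rfl

lemma dist_proj_le {n m : ℕ} (x x' : EuclideanSpace ℝ (Fin n ⊕ Fin m)) :
    dist (projL x) (projL x') ≤ dist x x' ∧ dist (projR x) (projR x') ≤ dist x x' := by
  simp only [EuclideanSpace.dist_eq, Fintype.sum_sum_type]
  constructor
  · refine Real.sqrt_le_sqrt (le_add_of_le_of_nonneg le_rfl ?_)
    positivity
  · refine Real.sqrt_le_sqrt (le_add_of_nonneg_of_le ?_ le_rfl)
    positivity

/-- Lusin-type Lipschitz approximation, part (i): if the map `f : A → E`,
`A ⊆ ℝ^k = ℝ^n × ℝ^m`, is Borel and has finite partial difference quotients `δ_z(f(·,y))`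
on `A₁` and `δ_y(f(z,·))` on `A₂`, then `δ_x f < ∞` for `Leb^k`-a.e. `x ∈ A₁ ∩ A₂`. -/
theorem delta_finite_of_partial_delta_finite {E : Type*} [MetricSpace E] [CompactSpace E]
    [MeasurableSpace E] [BorelSpace E]
    (n m : ℕ) (hn : 1 ≤ n) (hm : 1 ≤ m)
    (A A₁ A₂ : Set (EuclideanSpace ℝ (Fin n ⊕ Fin m)))
    (hA : MeasurableSet A) (hA₁ : MeasurableSet A₁) (hA₂ : MeasurableSet A₂)
    (hA₁A : A₁ ⊆ A) (hA₂A : A₂ ⊆ A)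
    (f : EuclideanSpace ℝ (Fin n ⊕ Fin m) → E) (hf : Measurable f)
    (hslice₁ : ∀ x ∈ A₁,
      delta n {z' : EuclideanSpace ℝ (Fin n) | combine z' (projR x) ∈ A}
        (fun z' => f (combine z' (projR x))) (projL x) < ⊤)
    (hslice₂ : ∀ x ∈ A₂,
      delta m {y' : EuclideanSpace ℝ (Fin m) | combine (projL x) y' ∈ A}
        (fun y' => f (combine (projL x) y')) (projR x) < ⊤) :
    ∀ᵐ x ∂volume, x ∈ A₁ ∩ A₂ → delta (n + m) A f x < ⊤ := by
  have hc : Measurable (fun q : EuclideanSpace ℝ (Fin n) × EuclideanSpace ℝ (Fin m) =>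
      combine q.1 q.2) := by
    simp only [combine_eq_symm]
    exact (splitE n m).symm.measurable
  have hmain := ae_all_iff.2 fun M : ℕ => (splitE_mp n m).quasiMeasurePreserving.ae
      (prod_main {q | combine q.1 q.2 ∈ A} (hA.preimage hc) (fun q => f (combine q.1 q.2))
        (hf.comp hc) M)
  filter_upwards [hmain] with x hx hxA
  obtain ⟨M₁, h₁⟩ := delta_lt_top_imp (hslice₁ x hxA.1)
  obtain ⟨M₂, h₂⟩ := delta_lt_top_imp (hslice₂ x hxA.2)
  have hfin := hx (max M₁ M₂)
    (by change combine (projL x) (projR x) ∈ A; rw [combine_proj]; exact hA₁A hxA.1)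
    (h₁ _ (le_max_left _ _)) (h₂ _ (le_max_right _ _))
  refine delta_lt_top_of (2 * ((max M₁ M₂ : ℕ) : ENNReal))
    (ENNReal.mul_ne_top (by simp) (ENNReal.natCast_ne_top _)) (hfin.mono fun i => ?_)
  rw [← (splitE_mp n m).measure_preimage_equiv]
  refine measure_mono ?_
  rintro y ⟨hy1, hy2, hy3⟩
  have hd := dist_proj_le y x
  refine ⟨?_, hd.1.trans_lt hy2, hd.2.trans_lt hy2, ?_⟩
  · change combine (projL y) (projR y) ∈ A
    rwa [combine_proj]
  · change _ < edist (f (combine (projL y) (projR y))) (f (combine (projL x) (projR x)))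
    rwa [combine_proj, combine_proj]
end

section
/- Let E be a compact metric space, A ⊆ ℝ^k Borel, and f : A → E a Borel map such that δ_x f < ∞ for Leb^k-almost every x ∈ A. Then there exists a sequence of Borel sets B_n ⊆ A such that Leb^k(A \ ⋃_n B_n) = 0 and the restriction of f to each B_n is a Lipschitz map. -/
open MeasureTheory Filter Metric Set

/-- The set where the bad sets have small measure at all scales below `1/(m+1)`. -/
def goodSet {k : ℕ} {E : Type*} [MetricSpace E] (A : Set (EuclideanSpace ℝ (Fin k)))
    (f : EuclideanSpace ℝ (Fin k) → E) (η : ENNReal) (N m : ℕ) :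
    Set (EuclideanSpace ℝ (Fin k)) :=
  {x | x ∈ A ∧ ∀ r : ℝ, 0 < r → r < 1 / ((m : ℝ) + 1) →
    volume {y | y ∈ A ∩ ball x r ∧ (N : ENNReal) * ENNReal.ofReal r < edist (f y) (f x)} ≤
      η * ENNReal.ofReal (r ^ k) ∧
    volume (Aᶜ ∩ closedBall x r) ≤ η * ENNReal.ofReal (r ^ k)}

lemma good_lip {k : ℕ} {E : Type*} [MetricSpace E] (A : Set (EuclideanSpace ℝ (Fin k)))
    (f : EuclideanSpace ℝ (Fin k) → E) (η : ENNReal) (N m : ℕ)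
    (hη : 4 * η < ENNReal.ofReal ((1/2) ^ k) *
      volume (ball (0 : EuclideanSpace ℝ (Fin k)) 1))
    {x z : EuclideanSpace ℝ (Fin k)} (hx : x ∈ goodSet A f η N m) (hz : z ∈ goodSet A f η N m)
    (hd : dist x z < 1 / ((m : ℝ) + 1)) :
    edist (f x) (f z) ≤ ((2 * N : NNReal) : ENNReal) * edist x z := by
  rcases eq_or_ne x z with rfl | hne
  · simp
  set r := dist x z with hr
  have hr0 : 0 < r := dist_pos.2 hne
  obtain ⟨hx1, hx2⟩ := hx.2 r hr0 hd
  obtain ⟨hz1, hz2⟩ := hz.2 r hr0 hd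
  by_contra hcon
  have hsub : ball (midpoint ℝ x z) (r / 2) ⊆
      (({y | y ∈ A ∩ ball x r ∧ (N : ENNReal) * ENNReal.ofReal r < edist (f y) (f x)} ∪
      (Aᶜ ∩ closedBall x r)) ∪
      ({y | y ∈ A ∩ ball z r ∧ (N : ENNReal) * ENNReal.ofReal r < edist (f y) (f z)} ∪
      (Aᶜ ∩ closedBall z r))) := by
    intro y hy
    have hyx : y ∈ ball x r := by
      have h1 := dist_triangle y (midpoint ℝ x z) x
      have h2 : dist (midpoint ℝ x z) x = r / 2 := by
        rw [dist_midpoint_left]; simp; ring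
      rw [mem_ball] at hy ⊢
      linarith
    have hyz : y ∈ ball z r := by
      have h1 := dist_triangle y (midpoint ℝ x z) z
      have h2 : dist (midpoint ℝ x z) z = r / 2 := by
        rw [dist_midpoint_right]; simp; ring
      rw [mem_ball] at hy ⊢
      linarith
    by_cases hyA : y ∈ A
    · by_contra hno
      simp only [mem_union, mem_ofPred_eq, mem_inter_iff, not_or, not_and, not_lt] at hno
      have h1 := hno.1.1 ⟨hyA, hyx⟩
      have h2 := hno.2.1 ⟨hyA, hyz⟩
      apply hcon
      calc edist (f x) (f z) ≤ edist (f y) (f x) + edist (f y) (f z) :=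
            edist_triangle_left _ _ _
        _ ≤ N * ENNReal.ofReal r + N * ENNReal.ofReal r := add_le_add h1 h2
        _ = _ := by rw [edist_dist, ← hr]; push_cast; ring
    · exact Or.inl (Or.inr ⟨hyA, ball_subset_closedBall hyx⟩)
  have hle := (measure_mono (μ := volume) hsub).trans ((measure_union_le _ _).trans
    (add_le_add ((measure_union_le _ _).trans (add_le_add hx1 hx2))
      ((measure_union_le _ _).trans (add_le_add hz1 hz2))))
  rw [Measure.addHaar_ball_of_pos _ _ (half_pos hr0)] at hle
  have hfin : Module.finrank ℝ (EuclideanSpace ℝ (Fin k)) = k := by simp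
  rw [hfin] at hle
  have e1 : ENNReal.ofReal ((r/2)^k) = ENNReal.ofReal (r^k) * ENNReal.ofReal ((1/2)^k) := by
    rw [← ENNReal.ofReal_mul (by positivity), ← mul_pow]; congr 2; ring
  have e2 : η * ENNReal.ofReal (r ^ k) + η * ENNReal.ofReal (r ^ k) +
      (η * ENNReal.ofReal (r ^ k) + η * ENNReal.ofReal (r ^ k)) =
      ENNReal.ofReal (r ^ k) * (4 * η) := by ring
  rw [e1, e2, mul_assoc] at hle
  have h0 : ENNReal.ofReal (r ^ k) ≠ 0 := by
    simp only [ne_eq, ENNReal.ofReal_eq_zero, not_le]; positivity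
  exact absurd ((ENNReal.mul_le_mul_iff_right h0 ENNReal.ofReal_ne_top).1 hle) (not_le.2 hη)

lemma lip_closure {X E : Type*} [MetricSpace X] [MetricSpace E]
    (f : X → E) (K : NNReal) (S : Set X) (hS : LipschitzOnWith K f S) :
    LipschitzOnWith K f {x | (x, f x) ∈ closure ((fun x => (x, f x)) '' S)} := by
  set G := (fun x => (x, f x)) '' S with hG
  have hcl : IsClosed {p : (X × E) × (X × E) | dist p.1.2 p.2.2 ≤ K * dist p.1.1 p.2.1} :=
    isClosed_le (by fun_prop) (by fun_prop)
  have hsub : closure (G ×ˢ G) ⊆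
      {p : (X × E) × (X × E) | dist p.1.2 p.2.2 ≤ K * dist p.1.1 p.2.1} := by
    apply closure_minimal _ hcl
    rintro ⟨_, _⟩ ⟨⟨x, hx, rfl⟩, ⟨y, hy, rfl⟩⟩
    exact hS.dist_le_mul x hx y hy
  rw [closure_prod_eq] at hsub
  apply LipschitzOnWith.of_dist_le_mul
  intro x hx y hy
  exact hsub (mk_mem_prod hx hy)

lemma ae_good {k : ℕ} {E : Type*} [MetricSpace E] (A : Set (EuclideanSpace ℝ (Fin k)))
    (hA : MeasurableSet A) (f : EuclideanSpace ℝ (Fin k) → E)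
    (hδ : ∀ᵐ x ∂volume, x ∈ A → delta k A f x < ⊤) (η : ENNReal) (hη : 0 < η) :
    ∀ᵐ x ∂volume, x ∈ A → ∃ N m, x ∈ goodSet A f η N m := by
  have hdens := Besicovitch.ae_tendsto_measure_inter_div_of_measurableSet
    (volume : Measure (EuclideanSpace ℝ (Fin k))) hA.compl
  filter_upwards [hδ, hdens] with x hx1 hx2 hxA
  obtain ⟨M, hM, hMtop⟩ := sInf_lt_iff.1 (hx1 hxA)
  obtain ⟨N, hN⟩ := ENNReal.exists_nat_gt hMtop.ne
  have hc0 : volume (ball (0 : EuclideanSpace ℝ (Fin k)) 1) ≠ 0 :=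
    (measure_ball_pos _ _ one_pos).ne'
  have hct : volume (ball (0 : EuclideanSpace ℝ (Fin k)) 1) ≠ ⊤ := measure_ball_lt_top.ne
  rw [indicator_of_notMem (by simpa using hxA)] at hx2
  have E1 := (hM : Tendsto _ _ _).eventually (gt_mem_nhds hη)
  have E2 := hx2.eventually (gt_mem_nhds (ENNReal.div_pos hη.ne' hct))
  obtain ⟨u, hu0, hu⟩ := mem_nhdsGT_iff_exists_Ioo_subset.1 (E1.and E2)
  obtain ⟨m, hm⟩ := exists_nat_one_div_lt (show (0:ℝ) < u from hu0)
  refine ⟨N, m, hxA, fun r hr0 hr => ?_⟩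
  obtain ⟨h1, h2⟩ := hu ⟨hr0, hr.trans hm⟩
  have h0 : ENNReal.ofReal (r ^ k) ≠ 0 := by
    simp only [ne_eq, ENNReal.ofReal_eq_zero, not_le]; positivity
  constructor
  · refine le_trans (measure_mono ?_)
      ((ENNReal.div_le_iff h0 ENNReal.ofReal_ne_top).1 h1.le)
    rintro y ⟨hy1, hy2⟩
    exact ⟨hy1, lt_of_le_of_lt (by gcongr) hy2⟩
  · have hfin : Module.finrank ℝ (EuclideanSpace ℝ (Fin k)) = k := by simp
    have h3 := h2.le
    rw [Measure.addHaar_closedBall _ _ hr0.le, hfin,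
      ENNReal.div_le_iff (mul_ne_zero h0 hc0) (ENNReal.mul_ne_top ENNReal.ofReal_ne_top hct),
      mul_comm (ENNReal.ofReal (r ^ k)), ← mul_assoc, ENNReal.div_mul_cancel hc0 hct] at h3
    exact h3

/-- Theorem on Lusin-type Lipschitz approximation, part (ii):
if `δ_x f < ∞` for a.e. `x ∈ A`, then `A` can be covered, up to a Lebesgue negligible set,
by countably many Borel sets on which `f` is Lipschitz. -/
theorem lusin_lipschitz_approximation {E : Type*} [MetricSpace E] [CompactSpace E]
    [MeasurableSpace E] [BorelSpace E]
    (k : ℕ) (A : Set (EuclideanSpace ℝ (Fin k))) (hA : MeasurableSet A)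
    (f : EuclideanSpace ℝ (Fin k) → E) (hf : Measurable f)
    (hδ : ∀ᵐ x ∂volume, x ∈ A → delta k A f x < ⊤) :
    ∃ B : ℕ → Set (EuclideanSpace ℝ (Fin k)),
      (∀ n, MeasurableSet (B n)) ∧ (∀ n, B n ⊆ A) ∧
      volume (A \ ⋃ n, B n) = 0 ∧
      ∀ n, ∃ K : NNReal, LipschitzOnWith K f (B n) := by
  have hpos : 0 < ENNReal.ofReal ((1/2) ^ k) *
      volume (ball (0 : EuclideanSpace ℝ (Fin k)) 1) :=
    ENNReal.mul_pos (by simp only [ne_eq, ENNReal.ofReal_eq_zero, not_le]; positivity)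
      (measure_ball_pos _ _ one_pos).ne'
  obtain ⟨c, hc0, hc⟩ := exists_between hpos
  set η := c / 4 with hηdef
  have hη0 : 0 < η := ENNReal.div_pos hc0.ne' (by simp)
  have hη : 4 * η < ENNReal.ofReal ((1/2) ^ k) *
      volume (ball (0 : EuclideanSpace ℝ (Fin k)) 1) := by
    rwa [hηdef, ENNReal.mul_div_cancel (by simp) (by simp)]
  let q := TopologicalSpace.denseSeq (EuclideanSpace ℝ (Fin k))
  let S : ℕ × ℕ × ℕ → Set (EuclideanSpace ℝ (Fin k)) := fun p =>
    goodSet A f η p.1 p.2.1 ∩ ball (q p.2.2) (1 / ((p.2.1 : ℝ) + 1) / 2)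
  let T : ℕ × ℕ × ℕ → Set (EuclideanSpace ℝ (Fin k)) := fun p =>
    {x | (x, f x) ∈ closure ((fun x => (x, f x)) '' S p)}
  let e : ℕ ≃ ℕ × ℕ × ℕ := (Denumerable.eqv (ℕ × ℕ × ℕ)).symm
  have hST : ∀ p, S p ⊆ T p := fun p x hx => subset_closure (mem_image_of_mem _ hx)
  refine ⟨fun n => A ∩ T (e n), fun n => ?_, fun n => inter_subset_left, ?_, fun n => ?_⟩
  · exact hA.inter ((measurable_id.prodMk hf) isClosed_closure.measurableSet)
  · have h := ae_good A hA f hδ η hη0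
    rw [ae_iff] at h
    refine measure_mono_null ?_ h
    rintro x ⟨hxA, hx⟩ hgood
    obtain ⟨N, m, hxg⟩ := hgood hxA
    obtain ⟨j, hj⟩ := (TopologicalSpace.denseRange_denseSeq
      (EuclideanSpace ℝ (Fin k))).exists_dist_lt x
        (show 0 < 1 / ((m : ℝ) + 1) / 2 by positivity)
    apply hx
    refine mem_iUnion.2 ⟨e.symm (N, m, j), hxA, ?_⟩
    rw [Equiv.apply_symm_apply]
    exact hST _ ⟨hxg, hj⟩
  · refine ⟨2 * ((e n).1 : NNReal), LipschitzOnWith.mono (lip_closure f _ (S (e n)) ?_)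
      inter_subset_right⟩
    intro x hx z hz
    refine good_lip A f η _ _ hη hx.1 hz.1 ?_
    have h1 := hx.2
    have h2 := hz.2
    rw [mem_ball] at h1 h2
    have := dist_triangle_right x z (q (e n).2.2)
    linarith
end
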